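/- Let α ⪰ ω be lattice paths from (0,0) to (n,r). Then the set Γ of all monomials dividing some m(σ) with α ⪰ σ ⪰ ω is a discrete polymatroid of rank r, and its bases (maximal elements under divisibility) are exactly the monomials m(σ) for α ⪰ σ ⪰ ω. -/

import Mathlib

/-- A lattice path from `(0,0)` to `(n,r)`, encoded by the set of positions of
its north steps among its `n + r` steps. -/
def IsLatticePath (n r : ℕ) (σ : Finset ℕ) : Prop :=
  σ ⊆ Finset.Icc 1 (n + r) ∧ σ.card = r

/-- `σ ⪰ τ`: each element of `N(σ)`, in increasing order, is at most the
corresponding element of `N(τ)`. -/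
def PathAbove (σ τ : Finset ℕ) : Prop :=
  ∀ k (h1 : k < (σ.sort (· ≤ ·)).length) (h2 : k < (τ.sort (· ≤ ·)).length),
    (σ.sort (· ≤ ·)).get ⟨k, h1⟩ ≤ (τ.sort (· ≤ ·)).get ⟨k, h2⟩

/-- The number of east steps of `σ` before position `a`. -/
def eastBefore (σ : Finset ℕ) (a : ℕ) : ℕ :=
  ((Finset.Icc 1 (a - 1)).filter (fun b => b ∉ σ)).card

/-- The monomial `m(σ)` of a lattice path: the exponent of `x_i` is the number
of north steps of `σ` along the line `x = i`. -/
noncomputable def pathMonomial (σ : Finset ℕ) : ℕ →₀ ℕ :=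
  ∑ a ∈ σ, Finsupp.single (eastBefore σ a) 1

/-- The bases of the lattice path polymatroid `Γ(α, ω)`: the monomials `m(σ)`
for lattice paths `σ` with `α ⪰ σ ⪰ ω`. -/
def IsLPBasis (n r : ℕ) (α ω : Finset ℕ) (m : ℕ →₀ ℕ) : Prop :=
  ∃ σ : Finset ℕ, IsLatticePath n r σ ∧ PathAbove α σ ∧ PathAbove σ ω ∧ m = pathMonomial σ
/-- The total degree of a monomial (exponent vector). -/
def monDeg (m : ℕ →₀ ℕ) : ℕ := m.sum fun _ v => v

/-- A discrete polymatroid: a finite, divisibility-closed set of monomials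
satisfying the exchange property. -/
def IsDiscretePolymatroid (Γ : Set (ℕ →₀ ℕ)) : Prop :=
  Γ.Finite ∧
  (∀ m ∈ Γ, ∀ m' : ℕ →₀ ℕ, m' ≤ m → m' ∈ Γ) ∧
  (∀ m ∈ Γ, ∀ m' ∈ Γ, monDeg m' < monDeg m →
    ∃ i, m' i < m i ∧ m' + Finsupp.single i 1 ∈ Γ)

/-- A basis of `Γ`: a maximal element under divisibility. -/
def IsBasisOf (Γ : Set (ℕ →₀ ℕ)) (m : ℕ →₀ ℕ) : Prop :=
  m ∈ Γ ∧ ∀ m' ∈ Γ, m ≤ m' → m' = m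

/-!
A monomial of degree `r` is the multiset of columns of `r` north steps, so lattice paths
correspond to degree-`r` monomials, and `σ ⪰ τ` says that every prefix sum of the exponents of
`m(σ)` is at least that of `m(τ)`. The monomials `m(σ)` with `α ⪰ σ ⪰ ω` are therefore the
degree-`r` monomials whose prefix sums lie between two fixed bounds. Such a family has the basis
exchange property: if `b'` has a smaller exponent than `b` at `i`, then follow the difference of
the prefix sums away from `i` while its sign persists; where the sign is lost there is an index
`j` with `b j < b' j`, and moving a unit of `b` from `i` to `j` keeps the prefix sums between
those of `b` and `b'` on the range where they change.

As for matroids, basis exchange makes the set of divisors a discrete polymatroid. Given `m ≤ b` and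
`m' ≤ b'` with `deg m' < deg m`, choose the base `b` above `m` as close to `b'` as possible, so that
`b` exceeds `b'` only where `b` agrees with `m`. Then `m'` can be augmented inside `b'` or inside
one exchange of it, since otherwise `m + b' ≤ m' + b`, contradicting the degrees.
-/

open Finset Finsupp

section BaseExchange

variable {ι : Type*} {b b' m m' : ι →₀ ℕ} {i j : ι} {r : ℕ}

/-- The base axioms of a discrete polymatroid of rank `r`: all members of `B` have degree `r`, and
a unit of `b ∈ B` at an index where `b` exceeds `b' ∈ B` can be moved, within `B`, to an index
where `b'` exceeds `b`. -/
structure IsPolymatroidBaseSet (r : ℕ) (B : Set (ι →₀ ℕ)) : Prop where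
  degree_eq : ∀ b ∈ B, b.degree = r
  exchange : ∀ b ∈ B, ∀ b' ∈ B, ∀ i, b' i < b i →
    ∃ j, b j < b' j ∧ b - single i 1 + single j 1 ∈ B

lemma add_single_le_of_lt (hm : m ≤ b) (hi : m i < b i) : m + single i 1 ≤ b := by
  classical
  intro k
  have hmk := hm k
  rw [Finsupp.add_apply, single_apply]
  split_ifs with hik
  · subst hik; exact hi
  · exact hmk

lemma degree_exchange_tsub_lt (hi : b' i < b i) (hj : b j < b' j) :
    (b - single i 1 + single j 1 - b').degree < (b - b').degree := by
  classical
  have hsub : b - single i 1 + single j 1 - b' + single i 1 = b - b' := by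
    ext k
    simp only [Finsupp.add_apply, Finsupp.tsub_apply, single_apply]
    split_ifs <;> subst_vars <;> omega
  have hdeg := congrArg degree hsub
  rw [map_add, degree_single] at hdeg
  omega

lemma eq_of_le_of_degree_eq (hle : b ≤ b') (hdeg : b.degree = b'.degree) : b = b' := by
  have hsum := congrArg degree (add_tsub_cancel_of_le hle)
  rw [map_add, hdeg, add_eq_left, degree_eq_zero_iff] at hsum
  exact le_antisymm hle (tsub_eq_zero_iff_le.mp hsum)

namespace IsPolymatroidBaseSet

variable {B : Set (ι →₀ ℕ)}

lemma exists_tight_base (hB : IsPolymatroidBaseSet r B) (hb : b ∈ B) (hb' : b' ∈ B)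
    (hm : m ≤ b) : ∃ c ∈ B, m ≤ c ∧ ∀ i, b' i < c i → c i ≤ m i := by
  obtain ⟨c, ⟨hc, hmc⟩, hmin⟩ := exists_minimalFor_of_wellFoundedLT
    (fun c => c ∈ B ∧ m ≤ c) (fun c => (c - b').degree) ⟨b, hb, hm⟩
  refine ⟨c, hc, hmc, fun i hi => ?_⟩
  by_contra! hmi
  obtain ⟨j, hj, hexch⟩ := hB.exchange c hc b' hb' i hi
  have hm_le : m ≤ c - single i 1 + single j 1 :=
    (le_tsub_of_add_le_right (add_single_le_of_lt hmc hmi)).trans le_self_add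
  have hlt := degree_exchange_tsub_lt hi hj
  exact hlt.not_ge (hmin ⟨hexch, hm_le⟩ hlt.le)

lemma exists_augmentation (hB : IsPolymatroidBaseSet r B) (hb : b ∈ B) (hb' : b' ∈ B)
    (hm : m ≤ b) (hm' : m' ≤ b') (hdeg : m'.degree < m.degree) :
    ∃ i, m' i < m i ∧ ∃ c ∈ B, m' + single i 1 ≤ c := by
  obtain ⟨c, hc, hmc, htight⟩ := hB.exists_tight_base hb hb' hm
  by_cases hfree : ∃ i, c i < b' i ∧ m' i < b' i
  · obtain ⟨i, hi, hmi⟩ := hfree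
    obtain ⟨j, hj, hexch⟩ := hB.exchange b' hb' c hc i hi
    have hmj : m' j < m j := (hm' j).trans_lt (hj.trans_le (htight j hj))
    exact ⟨j, hmj, _, hexch,
      add_le_add_left (le_tsub_of_add_le_right (add_single_le_of_lt hm' hmi)) _⟩
  by_cases hroom : ∃ i, m' i < m i ∧ m' i < b' i
  · obtain ⟨i, hi, hmi⟩ := hroom
    exact ⟨i, hi, b', hb', add_single_le_of_lt hm' hmi⟩
  push Not at hfree hroom
  have hle : m + b' ≤ m' + c := by
    intro k
    have := htight k
    have := hfree k
    have := hroom k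
    have := hmc k
    have := hm' k
    simp only [Finsupp.add_apply]
    omega
  have hdeg_le := degree_mono hle
  rw [map_add, map_add, hB.degree_eq c hc, hB.degree_eq b' hb'] at hdeg_le
  omega

end IsPolymatroidBaseSet

end BaseExchange

lemma monDeg_eq_degree (m : ℕ →₀ ℕ) : monDeg m = m.degree := rfl

namespace IsPolymatroidBaseSet

variable {r : ℕ} {B : Set (ℕ →₀ ℕ)}

theorem isDiscretePolymatroid_lowerClosure (hB : IsPolymatroidBaseSet r B) (hfin : B.Finite) :
    IsDiscretePolymatroid (lowerClosure B) := by
  refine ⟨hfin.lowerClosure, fun m hm m' hle => (lowerClosure B).lower hle hm, ?_⟩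
  rintro m ⟨b, hb, hmb⟩ m' ⟨b', hb', hmb'⟩ hdeg
  exact hB.exists_augmentation hb hb' hmb hmb' hdeg

theorem isBasisOf_lowerClosure_iff (hB : IsPolymatroidBaseSet r B) (m : ℕ →₀ ℕ) :
    IsBasisOf (lowerClosure B) m ↔ m ∈ B := by
  constructor
  · rintro ⟨⟨b, hb, hmb⟩, hmax⟩
    rwa [← hmax b (subset_lowerClosure hb) hmb]
  · intro hm
    refine ⟨subset_lowerClosure hm, ?_⟩
    rintro m' ⟨b, hb, hmb⟩ hle
    have hmb_eq : m = b := eq_of_le_of_degree_eq (hle.trans hmb)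
      ((hB.degree_eq m hm).trans (hB.degree_eq b hb).symm)
    exact le_antisymm (hmb.trans_eq hmb_eq.symm) hle

end IsPolymatroidBaseSet

section PrefixSum

/-- The total exponent of `b` in the variables `x_j` with `j < k`. -/
def prefixSum (b : ℕ →₀ ℕ) (k : ℕ) : ℕ := ∑ j ∈ range k, b j

variable {b b' : ℕ →₀ ℕ} {i j r : ℕ} {L U : ℕ → ℕ}

lemma prefixSum_zero (b : ℕ →₀ ℕ) : prefixSum b 0 = 0 := sum_range_zero _

lemma prefixSum_succ (b : ℕ →₀ ℕ) (k : ℕ) : prefixSum b (k + 1) = prefixSum b k + b k :=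
  sum_range_succ _ _

lemma prefixSum_add (b b' : ℕ →₀ ℕ) (k : ℕ) :
    prefixSum (b + b') k = prefixSum b k + prefixSum b' k :=
  sum_add_distrib

lemma prefixSum_single_one (j k : ℕ) : prefixSum (single j 1) k = if j < k then 1 else 0 := by
  simp [prefixSum, single_apply]

lemma prefixSum_eq_degree_of_support_subset {k : ℕ} (h : b.support ⊆ range k) :
    prefixSum b k = b.degree :=
  (sum_of_support_subset b h (fun _ v => v) fun _ _ => rfl).symm

lemma exists_prefixSum_eq_degree (b b' : ℕ →₀ ℕ) (i : ℕ) :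
    ∃ k, i ≤ k ∧ prefixSum b k = b.degree ∧ prefixSum b' k = b'.degree := by
  obtain ⟨N, hN⟩ := (b.support ∪ b'.support).exists_nat_subset_range
  have hN' : b.support ∪ b'.support ⊆ range (max i N) :=
    hN.trans (range_subset_range.mpr (le_max_right i N))
  exact ⟨max i N, le_max_left i N,
    prefixSum_eq_degree_of_support_subset (subset_union_left.trans hN'),
    prefixSum_eq_degree_of_support_subset (subset_union_right.trans hN')⟩

lemma prefixSum_exchange (hi : single i 1 ≤ b) (j k : ℕ) :
    prefixSum (b - single i 1 + single j 1) k + (if i < k then 1 else 0) =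
      prefixSum b k + (if j < k then 1 else 0) := by
  rw [← prefixSum_single_one, ← prefixSum_single_one, ← prefixSum_add, ← prefixSum_add,
    add_right_comm, tsub_add_cancel_of_le hi]

/-- The monomials of degree `r` whose prefix sums lie between `L` and `U`. The bases of a lattice
path polymatroid are such a family, with the prefix sums of its two bounding paths as bounds. -/
def prefixSumBand (r : ℕ) (L U : ℕ → ℕ) : Set (ℕ →₀ ℕ) :=
  {b | b.degree = r ∧ ∀ k, prefixSum b k ∈ Set.Icc (L k) (U k)}

lemma exchange_mem_prefixSumBand (hb : b ∈ prefixSumBand r L U) (hb' : b' ∈ prefixSumBand r L U)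
    (hi : single i 1 ≤ b) (hleft : ∀ k, j < k → k ≤ i → prefixSum b k < prefixSum b' k)
    (hright : ∀ k, i < k → k ≤ j → prefixSum b' k < prefixSum b k) :
    b - single i 1 + single j 1 ∈ prefixSumBand r L U := by
  obtain ⟨hdeg, hband⟩ := hb
  obtain ⟨-, hband'⟩ := hb'
  refine ⟨?_, fun k => ?_⟩
  · calc (b - single i 1 + single j 1).degree = (b - single i 1 + single i 1).degree := by
          simp only [map_add, degree_single]
      _ = r := by rw [tsub_add_cancel_of_le hi, hdeg]
  · have hsum := prefixSum_exchange hi j k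
    have := hleft k
    have := hright k
    obtain ⟨hlower, hupper⟩ := hband k
    obtain ⟨hlower', hupper'⟩ := hband' k
    rw [Set.mem_Icc]
    split_ifs at hsum <;> omega

lemma exists_maximal_run_right {p : ℕ → Prop} {a k : ℕ} (hak : a ≤ k) (ha : p a) (hk : ¬ p k) :
    ∃ j, a ≤ j ∧ (∀ l, a ≤ l → l ≤ j → p l) ∧ ¬ p (j + 1) := by
  by_contra! hstep
  have hrun : ∀ k, a ≤ k → ∀ l, a ≤ l → l ≤ k → p l := by
    intro k hak
    induction k, hak using Nat.le_induction with
    | base => intro l hal hla; rwa [le_antisymm hla hal]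
    | succ k hak ih =>
      intro l hal hlk
      obtain hlk | rfl := Nat.le_succ_iff.mp hlk
      exacts [ih l hal hlk, hstep k hak ih]
  exact hk (hrun k hak k hak le_rfl)

lemma exists_maximal_run_left {p : ℕ → Prop} {a : ℕ} (hzero : ¬ p 0) (ha : p a) :
    ∃ j < a, ¬ p j ∧ ∀ l, j < l → l ≤ a → p l := by
  induction a with
  | zero => exact absurd ha hzero
  | succ a ih =>
    by_cases hpa : p a
    · obtain ⟨j, hja, hj, hrun⟩ := ih hpa
      refine ⟨j, hja.trans a.lt_succ_self, hj, fun l hjl hla => ?_⟩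
      obtain hla | rfl := Nat.le_succ_iff.mp hla
      exacts [hrun l hjl hla, ha]
    · refine ⟨a, a.lt_succ_self, hpa, fun l hal hla => ?_⟩
      rwa [le_antisymm hla hal]

lemma exists_exchange_right (hdeg : b.degree = b'.degree)
    (hlt : prefixSum b' (i + 1) < prefixSum b (i + 1)) :
    ∃ j, i < j ∧ b j < b' j ∧ ∀ k, i < k → k ≤ j → prefixSum b' k < prefixSum b k := by
  obtain ⟨k, hik, hk, hk'⟩ := exists_prefixSum_eq_degree b b' (i + 1)
  obtain ⟨j, hij, hrun, hend⟩ :=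
    exists_maximal_run_right (p := fun k => prefixSum b' k < prefixSum b k) hik hlt (by omega)
  refine ⟨j, hij, ?_, hrun⟩
  have := hrun j hij le_rfl
  rw [prefixSum_succ, prefixSum_succ] at hend
  omega

lemma exists_exchange_left (hlt : prefixSum b i < prefixSum b' i) :
    ∃ j < i, b j < b' j ∧ ∀ k, j < k → k ≤ i → prefixSum b k < prefixSum b' k := by
  obtain ⟨j, hji, hend, hrun⟩ :=
    exists_maximal_run_left (p := fun k => prefixSum b k < prefixSum b' k)
      (by simp only [prefixSum_zero, lt_irrefl, not_false_eq_true]) hlt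
  refine ⟨j, hji, ?_, hrun⟩
  have := hrun (j + 1) j.lt_succ_self hji
  rw [prefixSum_succ, prefixSum_succ] at this
  omega

theorem isPolymatroidBaseSet_prefixSumBand (r : ℕ) (L U : ℕ → ℕ) :
    IsPolymatroidBaseSet r (prefixSumBand r L U) where
  degree_eq _ hb := hb.1
  exchange b hb b' hb' i hi := by
    have hbi : single i 1 ≤ b := single_le_iff.mpr (Nat.one_le_of_lt hi)
    by_cases hright : prefixSum b' (i + 1) < prefixSum b (i + 1)
    · obtain ⟨j, hij, hj, hrun⟩ := exists_exchange_right (hb.1.trans hb'.1.symm) hright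
      exact ⟨j, hj, exchange_mem_prefixSumBand hb hb' hbi (by omega) hrun⟩
    · have hleft : prefixSum b i < prefixSum b' i := by
        rw [prefixSum_succ, prefixSum_succ] at hright
        omega
      obtain ⟨j, hji, hj, hrun⟩ := exists_exchange_left hleft
      exact ⟨j, hj, exchange_mem_prefixSumBand hb hb' hbi hrun (by omega)⟩

end PrefixSum

section Columns

variable {n r : ℕ}

/-- The monomial `∏ x_{c k}` of the path whose north steps lie, in order, on the lines
`x = c k`. -/
noncomputable def columnMonomial (c : Fin r →o ℕ) : ℕ →₀ ℕ := ∑ k, single (c k) 1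

lemma exists_columnMonomial_eq {b : ℕ →₀ ℕ} (hb : b.degree = r) :
    ∃ c : Fin r →o ℕ, columnMonomial c = b := by
  obtain ⟨l, hsorted, hl⟩ : ∃ l : List ℕ, l.SortedLE ∧ (l : Multiset ℕ) = b.toMultiset :=
    ⟨_, (Multiset.pairwise_sort b.toMultiset (· ≤ ·)).sortedLE, Multiset.sort_eq _ _⟩
  have hlen : l.length = r := by
    rw [← Multiset.coe_card, hl, card_toMultiset, ← hb]
    rfl
  subst hlen
  refine ⟨⟨l.get, hsorted.monotone_get⟩, Multiset.toFinsupp.symm.injective ?_⟩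
  calc toMultiset (∑ k, single (l.get k) 1) = ∑ k, {l.get k} := by
        simp only [toMultiset_sum, toMultiset_single, one_smul]
    _ = ((univ.val.map l.get).map singleton).sum := by rw [Multiset.map_map]; rfl
    _ = b.toMultiset := by
        rw [Multiset.sum_map_singleton, Fin.univ_val_map, List.ofFn_get, hl]

lemma prefixSum_columnMonomial (c : Fin r →o ℕ) (i : ℕ) :
    prefixSum (columnMonomial c) i = #{k | c k < i} := by
  simp only [prefixSum, columnMonomial, Finsupp.finsetSum_apply]
  rw [Finset.sum_comm, card_filter]
  exact sum_congr rfl fun k _ => prefixSum_single_one _ _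

lemma le_iff_prefixSum_columnMonomial_le (c d : Fin r →o ℕ) :
    c ≤ d ↔ prefixSum (columnMonomial d) ≤ prefixSum (columnMonomial c) := by
  simp only [Pi.le_def, prefixSum_columnMonomial]
  refine ⟨fun hcd i => card_le_card fun k => ?_, fun hcard k => ?_⟩
  · simpa using (hcd k).trans_lt
  · by_contra! hlt
    have hd : Iic k ⊆ ({l | d l < c k} : Finset (Fin r)) := fun l hl => by
      simpa using (d.monotone (mem_Iic.mp hl)).trans_lt hlt
    have hc : ({l | c l < c k} : Finset (Fin r)) ⊆ Iio k := fun l hl => by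
      simpa using c.monotone.reflect_lt (mem_filter.mp hl).2
    have hchain := (card_le_card hd).trans ((hcard (c k)).trans (card_le_card hc))
    rw [Fin.card_Iic, Fin.card_Iio] at hchain
    omega

lemma le_prefixSum_columnMonomial_iff (c : Fin r →o ℕ) :
    r ≤ prefixSum (columnMonomial c) (n + 1) ↔ ∀ k, c k ≤ n := by
  rw [prefixSum_columnMonomial]
  nth_rewrite 1 [← card_fin r]
  rw [(card_filter_le _ _).ge_iff_eq, card_filter_eq_iff]
  simp only [mem_univ, true_imp_iff, Nat.lt_succ_iff]

/-- The position of the `k`-th north step (counted from `0`) on the path whose `l`-th north step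
lies on the line `x = c l`: it is preceded by `c k` east steps and `k` north steps. -/
def northStep (c : Fin r →o ℕ) : Fin r ↪o ℕ :=
  OrderEmbedding.ofStrictMono (fun k => c k + k + 1) fun k l hkl => by
    have := c.monotone hkl.le
    have : (k : ℕ) < l := hkl
    simp only
    omega

/-- The lattice path whose `k`-th north step lies on the line `x = c k`. -/
def columnPath (c : Fin r →o ℕ) : Finset ℕ := univ.map (northStep c).toEmbedding

lemma northStep_apply (c : Fin r →o ℕ) (k : Fin r) : northStep c k = c k + k + 1 := rfl

lemma card_columnPath (c : Fin r →o ℕ) : #(columnPath c) = r := by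
  rw [columnPath, card_map, card_fin]

lemma eastBefore_mono (σ : Finset ℕ) : Monotone (eastBefore σ) := fun _ _ h =>
  card_le_card (filter_subset_filter _ (Icc_subset_Icc le_rfl (Nat.sub_le_sub_right h 1)))

lemma eastBefore_map_add (a : Fin r ↪o ℕ) (ha : ∀ k, 0 < a k) (k : Fin r) :
    eastBefore (univ.map a.toEmbedding) (a k) + k + 1 = a k := by
  have hnorth : {x ∈ Icc 1 (a k - 1) | x ∈ univ.map a.toEmbedding} =
      (Iio k).map a.toEmbedding := by
    ext x
    simp only [mem_filter, mem_Icc, mem_map, mem_univ, true_and, mem_Iio,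
      RelEmbedding.coe_toEmbedding]
    constructor
    · rintro ⟨⟨-, hx⟩, l, rfl⟩
      exact ⟨l, a.lt_iff_lt.mp (by have := ha k; omega), rfl⟩
    · rintro ⟨l, hl, rfl⟩
      have := a.strictMono hl
      exact ⟨⟨ha l, by omega⟩, l, rfl⟩
  have hsplit := card_filter_add_card_filter_not (s := Icc 1 (a k - 1))
    (· ∈ univ.map a.toEmbedding)
  rw [hnorth, card_map, Fin.card_Iio, Nat.card_Icc] at hsplit
  have := ha k
  rw [eastBefore]
  omega

lemma eastBefore_columnPath (c : Fin r →o ℕ) (k : Fin r) :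
    eastBefore (columnPath c) (northStep c k) = c k := by
  have := eastBefore_map_add (northStep c) (fun k => Nat.succ_pos _) k
  rw [northStep_apply] at *
  rw [columnPath]
  omega

lemma pathMonomial_columnPath (c : Fin r →o ℕ) :
    pathMonomial (columnPath c) = columnMonomial c := by
  rw [pathMonomial, columnMonomial]
  nth_rewrite 1 [columnPath]
  rw [sum_map]
  exact sum_congr rfl fun k _ => congrArg (single · 1) (eastBefore_columnPath c k)

lemma sort_columnPath (c : Fin r →o ℕ) :
    (columnPath c).sort (· ≤ ·) = List.ofFn (northStep c) := by
  have hsorted := (northStep c).strictMono.sortedLT_ofFn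
  have himage : columnPath c = (List.ofFn (northStep c)).toFinset := by
    ext x
    simp [columnPath, List.mem_ofFn]
  rw [himage]
  exact (List.toFinset_sort (· ≤ ·) hsorted.nodup).mpr hsorted.sortedLE.pairwise

lemma pathAbove_columnPath_iff (c d : Fin r →o ℕ) :
    PathAbove (columnPath c) (columnPath d) ↔ c ≤ d := by
  rw [PathAbove, sort_columnPath, sort_columnPath]
  simp only [List.get_ofFn, List.length_ofFn, northStep_apply, Fin.cast_mk]
  refine ⟨fun h k => ?_, fun h k hk _ => ?_⟩
  · simpa only [add_le_add_iff_right] using h k k.2 k.2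
  · simpa only [add_le_add_iff_right] using h ⟨k, hk⟩

lemma IsLatticePath.eastBefore_le {σ : Finset ℕ} (hσ : IsLatticePath n r σ) {a : ℕ}
    (ha : a ∈ σ) : eastBefore σ a ≤ n := by
  obtain ⟨hsub, hcard⟩ := hσ
  have ha_le : a ≤ n + r := (mem_Icc.mp (hsub ha)).2
  calc eastBefore σ a ≤ #(Icc 1 (n + r) \ σ) := card_le_card fun x hx => by
        obtain ⟨hx_mem, hx_east⟩ := mem_filter.mp hx
        obtain ⟨hx_pos, hx_lt⟩ := mem_Icc.mp hx_mem
        exact mem_sdiff.mpr ⟨mem_Icc.mpr ⟨hx_pos, by omega⟩, hx_east⟩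
    _ = n := by rw [card_sdiff_of_subset hsub, hcard, Nat.card_Icc]; omega

lemma IsLatticePath.exists_columnPath_eq {σ : Finset ℕ} (hσ : IsLatticePath n r σ) :
    ∃ c : Fin r →o ℕ, columnPath c = σ := by
  obtain ⟨hsub, hcard⟩ := hσ
  let a := σ.orderEmbOfFin hcard
  have hmap : univ.map a.toEmbedding = σ := σ.map_orderEmbOfFin_univ hcard
  have heast : ∀ k, eastBefore σ (a k) + k + 1 = a k := fun k => by
    simpa only [hmap] using
      eastBefore_map_add a (fun l => (mem_Icc.mp (hsub (σ.orderEmbOfFin_mem hcard l))).1) k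
  let c : Fin r →o ℕ := ⟨fun k => eastBefore σ (a k), (eastBefore_mono σ).comp a.monotone⟩
  have hstep : northStep c = a := RelEmbedding.ext heast
  exact ⟨c, by rw [columnPath, hstep, hmap]⟩

lemma isLatticePath_columnPath_iff (c : Fin r →o ℕ) :
    IsLatticePath n r (columnPath c) ↔ ∀ k, c k ≤ n := by
  refine ⟨fun h k => ?_, fun hc => ⟨fun x hx => ?_, card_columnPath c⟩⟩
  · rw [← eastBefore_columnPath c k]
    exact h.eastBefore_le (mem_map_of_mem _ (mem_univ k))
  · obtain ⟨k, -, rfl⟩ := mem_map.mp hx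
    have hstep : (northStep c).toEmbedding k = c k + k + 1 := rfl
    have := hc k
    rw [mem_Icc]
    omega

lemma pathAbove_iff_prefixSum_le {σ τ : Finset ℕ} (hσ : IsLatticePath n r σ)
    (hτ : IsLatticePath n r τ) :
    PathAbove σ τ ↔ prefixSum (pathMonomial τ) ≤ prefixSum (pathMonomial σ) := by
  obtain ⟨c, rfl⟩ := hσ.exists_columnPath_eq
  obtain ⟨d, rfl⟩ := hτ.exists_columnPath_eq
  rw [pathAbove_columnPath_iff, pathMonomial_columnPath, pathMonomial_columnPath,
    le_iff_prefixSum_columnMonomial_le]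

lemma degree_pathMonomial (σ : Finset ℕ) : (pathMonomial σ).degree = #σ := by
  simp only [pathMonomial, map_sum, degree_single, sum_const, smul_eq_mul, mul_one]

lemma IsLatticePath.le_prefixSum_pathMonomial {σ : Finset ℕ} (hσ : IsLatticePath n r σ) :
    r ≤ prefixSum (pathMonomial σ) (n + 1) := by
  obtain ⟨c, rfl⟩ := hσ.exists_columnPath_eq
  rw [pathMonomial_columnPath, le_prefixSum_columnMonomial_iff]
  exact (isLatticePath_columnPath_iff c).mp hσ

lemma exists_isLatticePath_pathMonomial_eq {b : ℕ →₀ ℕ} (hdeg : b.degree = r)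
    (hb : r ≤ prefixSum b (n + 1)) : ∃ σ, IsLatticePath n r σ ∧ pathMonomial σ = b := by
  obtain ⟨c, rfl⟩ := exists_columnMonomial_eq hdeg
  exact ⟨columnPath c,
    (isLatticePath_columnPath_iff c).mpr ((le_prefixSum_columnMonomial_iff c).mp hb),
    pathMonomial_columnPath c⟩

end Columns

section LatticePathBases

variable {n r : ℕ} {α ω : Finset ℕ}

theorem setOf_isLPBasis_eq_prefixSumBand (hα : IsLatticePath n r α) (hω : IsLatticePath n r ω) :
    {m | IsLPBasis n r α ω m} =
      prefixSumBand r (prefixSum (pathMonomial ω)) (prefixSum (pathMonomial α)) := by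
  ext b
  constructor
  · rintro ⟨σ, hσ, hασ, hσω, rfl⟩
    exact ⟨(degree_pathMonomial σ).trans hσ.2, fun k =>
      ⟨(pathAbove_iff_prefixSum_le hσ hω).mp hσω k, (pathAbove_iff_prefixSum_le hα hσ).mp hασ k⟩⟩
  · rintro ⟨hdeg, hband⟩
    obtain ⟨σ, hσ, rfl⟩ := exists_isLatticePath_pathMonomial_eq hdeg
      (hω.le_prefixSum_pathMonomial.trans (hband (n + 1)).1)
    exact ⟨σ, hσ, (pathAbove_iff_prefixSum_le hα hσ).mpr fun k => (hband k).2,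
      (pathAbove_iff_prefixSum_le hσ hω).mpr fun k => (hband k).1, rfl⟩

lemma finite_setOf_isLPBasis (n r : ℕ) (α ω : Finset ℕ) : {m | IsLPBasis n r α ω m}.Finite := by
  refine ((finite_toSet (Icc 1 (n + r)).powerset).image pathMonomial).subset ?_
  rintro _ ⟨σ, hσ, -, -, rfl⟩
  exact ⟨σ, mem_powerset.mpr hσ.1, rfl⟩

lemma lowerClosure_setOf_isLPBasis (n r : ℕ) (α ω : Finset ℕ) :
    (lowerClosure {m | IsLPBasis n r α ω m} : Set (ℕ →₀ ℕ)) =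
      {m | ∃ σ, IsLatticePath n r σ ∧ PathAbove α σ ∧ PathAbove σ ω ∧ m ≤ pathMonomial σ} := by
  ext m
  constructor
  · rintro ⟨_, ⟨σ, hσ, hασ, hσω, rfl⟩, hm⟩
    exact ⟨σ, hσ, hασ, hσω, hm⟩
  · rintro ⟨σ, hσ, hασ, hσω, hm⟩
    exact ⟨pathMonomial σ, ⟨σ, hσ, hασ, hσω, rfl⟩, hm⟩

end LatticePathBases

/-- The set of all monomials dividing some `m(σ)` with `α ⪰ σ ⪰ ω` is a
discrete polymatroid of rank `r`, whose bases are exactly the monomials `m(σ)`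
for lattice paths `σ` with `α ⪰ σ ⪰ ω`. -/
theorem stmt11 (n r : ℕ) (hn : 0 < n) (hr : 0 < r) (α ω : Finset ℕ)
    (hα : IsLatticePath n r α) (hω : IsLatticePath n r ω) (hαω : PathAbove α ω) :
    IsDiscretePolymatroid
      {m : ℕ →₀ ℕ | ∃ σ, IsLatticePath n r σ ∧ PathAbove α σ ∧ PathAbove σ ω ∧
        m ≤ pathMonomial σ} ∧
    (∀ m : ℕ →₀ ℕ,
      IsBasisOf {m : ℕ →₀ ℕ | ∃ σ, IsLatticePath n r σ ∧ PathAbove α σ ∧ PathAbove σ ω ∧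
        m ≤ pathMonomial σ} m ↔ IsLPBasis n r α ω m) ∧
    (∀ m : ℕ →₀ ℕ,
      IsBasisOf {m : ℕ →₀ ℕ | ∃ σ, IsLatticePath n r σ ∧ PathAbove α σ ∧ PathAbove σ ω ∧
        m ≤ pathMonomial σ} m → monDeg m = r) := by
  have hB : IsPolymatroidBaseSet r {m | IsLPBasis n r α ω m} := by
    rw [setOf_isLPBasis_eq_prefixSumBand hα hω]
    exact isPolymatroidBaseSet_prefixSumBand r _ _
  rw [← lowerClosure_setOf_isLPBasis n r α ω]
  refine ⟨hB.isDiscretePolymatroid_lowerClosure (finite_setOf_isLPBasis n r α ω),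
    hB.isBasisOf_lowerClosure_iff, fun m hm => ?_⟩
  rw [monDeg_eq_degree]
  exact hB.degree_eq m ((hB.isBasisOf_lowerClosure_iff m).mp hm)
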